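/- Let p = q ≥ 4 and n = p + q. Every tree T ∈ 𝒯_n^{p,q} that is isomorphic to none of B_{p,q}^{0,0}, B_{p,q}^{0,1}, B_{p,q}^{2,0}, B_{p,q}^{0,2} satisfies T ≺_s B_{p,q}^{0,2}; that is, for p = q ≥ 4 the tree B_{p,q}^{0,2} is the unique fourth last tree in the S-order among 𝒯_n^{p,q}. -/

import Mathlib

open SimpleGraph

open scoped Classical in
/-- The adjacency matrix of a simple graph, with real entries. -/
noncomputable def adjMat {V : Type*} [Fintype V] (G : SimpleGraph V) : Matrix V V ℝ :=
  Matrix.of fun a b => if G.Adj a b then 1 else 0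

/-- The `k`-th spectral moment `S_k(G) = tr(A(G)^k)`. -/
noncomputable def spectralMoment {V : Type*} [Fintype V] [DecidableEq V]
    (G : SimpleGraph V) (k : ℕ) : ℝ :=
  Matrix.trace (adjMat G ^ k)

/-- `SLt G₁ G₂` means `G₁ ≺_s G₂`: for some `k` with `1 ≤ k ≤ n - 1`,
`S_i(G₁) = S_i(G₂)` for all `i < k` and `S_k(G₁) < S_k(G₂)`. -/
def SLt {V : Type*} [Fintype V] [DecidableEq V] (G₁ G₂ : SimpleGraph V) : Prop :=
  ∃ k : ℕ, 1 ≤ k ∧ k ≤ Fintype.card V - 1 ∧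
    (∀ i < k, spectralMoment G₁ i = spectralMoment G₂ i) ∧
    spectralMoment G₁ k < spectralMoment G₂ k

/-- The tree `B_{p,q}^{k,l}` on `p + q` vertices: vertex `0 = u` is adjacent to `1 = v`
and to the `q - 1` vertices `2, …, q`; the distinguished neighbor `2` of `u` carries the
`k` pendant leaves `q+1, …, q+k`; the `l` neighbors `3, …, l+2` of `u` carry one pendant
leaf each (`q+k+j` is attached to `j+2` for `1 ≤ j ≤ l`); and `v` carries the
`p - k - l - 1` pendant leaves `q+k+l+1, …, p+q-1`. -/
def BTree (p q k l : ℕ) : SimpleGraph (Fin (p + q)) :=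
  SimpleGraph.fromRel (fun a b =>
    (a.val = 0 ∧ b.val = 1) ∨
    (a.val = 0 ∧ 2 ≤ b.val ∧ b.val ≤ q) ∨
    (a.val = 2 ∧ q + 1 ≤ b.val ∧ b.val ≤ q + k) ∨
    (q + k + 1 ≤ b.val ∧ b.val ≤ q + k + l ∧ a.val = b.val - (q + k) + 2) ∨
    (a.val = 1 ∧ q + k + l + 1 ≤ b.val))

/-- The tree `D_{p,q}^{k,l}` on `p + q` vertices: vertex `1 = v` is adjacent to `0 = u`
and to the `p - 1` vertices `2, …, p`; the distinguished neighbor `2` of `v` carries the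
`k` pendant leaves `p+1, …, p+k`; the `l` neighbors `3, …, l+2` of `v` carry one pendant
leaf each; and `u` carries the `q - k - l - 1` pendant leaves `p+k+l+1, …, p+q-1`. -/
def DTree (p q k l : ℕ) : SimpleGraph (Fin (p + q)) :=
  SimpleGraph.fromRel (fun a b =>
    (a.val = 0 ∧ b.val = 1) ∨
    (a.val = 1 ∧ 2 ≤ b.val ∧ b.val ≤ p) ∨
    (a.val = 2 ∧ p + 1 ≤ b.val ∧ b.val ≤ p + k) ∨
    (p + k + 1 ≤ b.val ∧ b.val ≤ p + k + l ∧ a.val = b.val - (p + k) + 2) ∨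
    (a.val = 0 ∧ p + k + l + 1 ≤ b.val))

/-- `T ∈ 𝒯_{p+q}^{p,q}`: `T` is a tree on `p + q` vertices with a `(p,q)`-bipartition. -/
def TreeBip (p q : ℕ) (G : SimpleGraph (Fin (p + q))) : Prop :=
  G.IsTree ∧ ∃ A : Finset (Fin (p + q)), A.card = p ∧
    ∀ ⦃x y : Fin (p + q)⦄, G.Adj x y → (x ∈ A ↔ y ∉ A)

/-!
Bipartite graphs have vanishing odd spectral moments and trees with equally many vertices have
equal `S_0` and `S_2`. In a tree, `S_4 = 2 ∑ d(x)² - ∑ d(x)`, so `S_4` compares the sums of the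
squares of the degrees.

If no vertex of `T` is adjacent to a whole colour class, the degrees, diminished by one, form in
each colour class a partition with at least two parts, and the squares of the degrees are too small.
Otherwise `T` is a tree of height two whose root `u` has `q` children, determined up to isomorphism
by the multiset of the numbers of their children, a partition of `p - 1` padded with zeros.
Restricted to the children of `u`, the square of the adjacency matrix is `J + D` with `J` the
all-ones matrix and `D` the diagonal matrix of these numbers, whence `S_{2k} = 2 tr (J + D) ^ k`; so
`S_4` compares sums of squares of partitions, and, if these agree, `S_6` sums of cubes. Among the
partitions of `m + 2`, the sum of squares is at least that of `(m, 1, 1)` only for `(m + 2)`,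
`(m + 1, 1)`, `(m, 2)`, `(m, 1, 1)` and, when `m = 4`, for `(3, 3)`.
-/

section Partition

lemma sum_map_sq_le_mul_sum {μ : Multiset ℕ} {B : ℕ} (h : ∀ i ∈ μ, i ≤ B) :
    (μ.map (· ^ 2)).sum ≤ B * μ.sum := by
  have hle : (μ.map (· ^ 2)).sum ≤ (μ.map (B * ·)).sum :=
    Multiset.sum_map_le_sum_map _ _ fun i hi => by
      rw [sq]
      exact Nat.mul_le_mul_right i (h i hi)
  rwa [Multiset.sum_map_mul_left, Multiset.map_id'] at hle

lemma partition_sum_sq_le_sq {n : ℕ} (P : n.Partition) : (P.parts.map (· ^ 2)).sum ≤ n ^ 2 := by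
  simpa [P.parts_sum, sq] using sum_map_sq_le_mul_sum fun _ => P.le_of_mem_parts

lemma sum_map_parts_ofSums {n : ℕ} {μ : Multiset ℕ} (hμ : μ.sum = n) {φ : ℕ → ℕ} (hφ : φ 0 = 0) :
    ((Nat.Partition.ofSums n μ hμ).parts.map φ).sum = (μ.map φ).sum := by
  conv_rhs => rw [← Multiset.filter_add_not (· ≠ 0) μ]
  have hzero : ((μ.filter fun i => ¬ i ≠ 0).map φ).sum = 0 :=
    Multiset.sum_eq_zero fun y hy => by
      obtain ⟨i, hi, rfl⟩ := Multiset.mem_map.1 hy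
      simp_all
  rw [Multiset.map_add, Multiset.sum_add, hzero, add_zero]
  rfl

lemma eq_of_card_eq_of_filter_ne_zero_eq {μ ν : Multiset ℕ} (hcard : μ.card = ν.card)
    (h : μ.filter (· ≠ 0) = ν.filter (· ≠ 0)) : μ = ν := by
  have hzeros (κ : Multiset ℕ) :
      κ = κ.filter (· ≠ 0) + Multiset.replicate (κ.card - (κ.filter (· ≠ 0)).card) 0 := by
    conv_lhs => rw [← Multiset.filter_add_not (· ≠ 0) κ]
    congr 1
    refine Multiset.eq_replicate.2 ⟨?_, fun i hi => by simp_all⟩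
    rw [← congrArg Multiset.card (Multiset.filter_add_not (· ≠ 0) κ), Multiset.card_add,
      Nat.add_sub_cancel_left]
  rw [hzeros μ, hzeros ν, h, hcard]

lemma exists_partition_parts_eq_cons_max {n : ℕ} (hn : n ≠ 0) (P : n.Partition) :
    ∃ (a r : ℕ) (R : r.Partition), 0 < a ∧ a + r = n ∧ P.parts = a ::ₘ R.parts ∧
      ∀ i ∈ R.parts, i ≤ a := by
  have hne : P.parts ≠ 0 := fun h => hn (by rw [← P.parts_sum, h, Multiset.sum_zero])
  obtain ⟨a, ha, hmax⟩ := Multiset.exists_max_image id hne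
  have hcons := Multiset.cons_erase ha
  refine ⟨a, (P.parts.erase a).sum,
    ⟨P.parts.erase a, fun hi => P.parts_pos (Multiset.mem_of_mem_erase hi), rfl⟩,
    P.parts_pos ha, ?_, hcons.symm, fun i hi => hmax i (Multiset.mem_of_mem_erase hi)⟩
  rw [← Multiset.sum_cons, hcons, P.parts_sum]

lemma partition_two_parts (P : Nat.Partition 2) : P.parts = {2} ∨ P.parts = {1, 1} := by
  obtain ⟨a, r, R, ha, har, hP, -⟩ := exists_partition_parts_eq_cons_max two_ne_zero P
  obtain ⟨rfl, rfl⟩ | ⟨rfl, rfl⟩ : a = 2 ∧ r = 0 ∨ a = 1 ∧ r = 1 := by omega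
  · exact .inl (by rw [hP, Nat.Partition.partition_zero_parts]; rfl)
  · exact .inr (by rw [hP, Nat.Partition.partition_one_parts]; rfl)

lemma partition_three_parts_eq_or_sum_sq_lt (P : Nat.Partition 3) :
    P.parts = {3} ∨ (P.parts.map (· ^ 2)).sum < 9 := by
  obtain ⟨a, r, R, ha, har, hP, hmax⟩ := exists_partition_parts_eq_cons_max three_ne_zero P
  obtain ⟨rfl, rfl⟩ | ha2 : a = 3 ∧ r = 0 ∨ a ≤ 2 := by omega
  · exact .inl (by rw [hP, Nat.Partition.partition_zero_parts]; rfl)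
  · have hle : ∀ i ∈ P.parts, i ≤ 2 := by
      rw [hP, Multiset.forall_mem_cons]
      exact ⟨ha2, fun i hi => (hmax i hi).trans ha2⟩
    have := sum_map_sq_le_mul_sum hle
    rw [P.parts_sum] at this
    exact .inr (by omega)

lemma partition_sum_sq_le_of_parts_ne_singleton {m : ℕ} (P : (m + 1).Partition)
    (hP : P.parts ≠ {m + 1}) : (P.parts.map (· ^ 2)).sum ≤ m ^ 2 + 1 := by
  obtain ⟨a, r, R, ha, har, hcons, -⟩ := exists_partition_parts_eq_cons_max m.succ_ne_zero P
  have hr : r ≠ 0 := by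
    rintro rfl
    refine hP ?_
    rw [hcons, Nat.Partition.partition_zero_parts, show a = m + 1 from har]
    rfl
  obtain ⟨i, rfl⟩ := Nat.exists_eq_add_of_lt ha
  obtain ⟨j, rfl⟩ := Nat.exists_eq_succ_of_ne_zero hr
  obtain rfl : m = i + j + 1 := by omega
  have := partition_sum_sq_le_sq R
  rw [hcons, Multiset.map_cons, Multiset.sum_cons]
  nlinarith

/-- The squares sum to at most both `a² + r²` and `a (a + r)`; the former settles `3 ≤ a`, up to
`(3, 3)`, the latter `a ≤ 2`. -/
lemma parts_eq_three_three_or_sum_sq_lt {a r m : ℕ} (P : (m + 2).Partition) (R : r.Partition)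
    (hr : 3 ≤ r) (har : a + r = m + 2) (hP : P.parts = a ::ₘ R.parts) (ha : ∀ i ∈ R.parts, i ≤ a) :
    (m = 4 ∧ P.parts = {3, 3}) ∨ (P.parts.map (· ^ 2)).sum < m ^ 2 + 2 := by
  have hsum : (P.parts.map (· ^ 2)).sum = a ^ 2 + (R.parts.map (· ^ 2)).sum := by
    rw [hP, Multiset.map_cons, Multiset.sum_cons]
  have hle_sq := partition_sum_sq_le_sq R
  have hle_mul : (P.parts.map (· ^ 2)).sum ≤ a * (m + 2) := by
    refine (sum_map_sq_le_mul_sum ?_).trans_eq (by rw [P.parts_sum])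
    rw [hP, Multiset.forall_mem_cons]
    exact ⟨le_rfl, ha⟩
  obtain ⟨r, rfl⟩ := Nat.exists_eq_add_of_le' hr
  obtain rfl : m = a + r + 1 := by omega
  rcases le_or_gt a 2 with ha2 | ha2
  · exact .inr (by nlinarith)
  obtain ⟨a, rfl⟩ := Nat.exists_eq_add_of_lt ha2
  rcases (a + r).eq_zero_or_pos with h0 | hpos
  · obtain ⟨rfl, rfl⟩ : a = 0 ∧ r = 0 := by omega
    rcases partition_three_parts_eq_or_sum_sq_lt R with hR | hR
    · exact .inl ⟨rfl, by rw [hP, hR]; rfl⟩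
    · exact .inr (by omega)
  · exact .inr (by nlinarith)

lemma partition_parts_eq_or_sum_sq_lt {m : ℕ} (P : (m + 2).Partition) :
    P.parts = {m + 2} ∨ P.parts = {m + 1, 1} ∨ P.parts = {m, 2} ∨ P.parts = {m, 1, 1} ∨
      (m = 4 ∧ P.parts = {3, 3}) ∨ (P.parts.map (· ^ 2)).sum < m ^ 2 + 2 := by
  obtain ⟨a, r, R, -, har, hP, hmax⟩ := exists_partition_parts_eq_cons_max (by omega) P
  match r, R, har with
  | 0, R, har =>
    rw [hP, R.partition_zero_parts, show a = m + 2 from har]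
    exact .inl rfl
  | 1, R, har =>
    rw [hP, R.partition_one_parts, show a = m + 1 by omega]
    exact .inr (.inl rfl)
  | 2, R, har =>
    rw [hP, show a = m by omega]
    rcases partition_two_parts R with hR | hR <;> rw [hR]
    · exact .inr (.inr (.inl rfl))
    · exact .inr (.inr (.inr (.inl rfl)))
  | r + 3, R, har =>
    exact .inr (.inr (.inr (.inr
      (parts_eq_three_three_or_sum_sq_lt P R (Nat.le_add_left 3 r) har hP hmax))))

end Partition

section SpectralMoment

variable {V : Type*} [Fintype V] {G H : SimpleGraph V}

lemma adjMat_eq_adjMatrix [DecidableRel G.Adj] : adjMat G = G.adjMatrix ℝ := by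
  ext x y
  simp [adjMat, adjMatrix_apply]

lemma transpose_adjMat : (adjMat G).transpose = adjMat G := by
  classical
  rw [adjMat_eq_adjMatrix, transpose_adjMatrix]

variable [DecidableEq V]

lemma adjMat_pow_apply_comm (k : ℕ) (x y : V) : (adjMat G ^ k) x y = (adjMat G ^ k) y x := by
  conv_lhs => rw [← transpose_adjMat, ← Matrix.transpose_pow, Matrix.transpose_apply]

lemma adjMat_sq_apply_eq_zero {x y : V} (h : ∀ z, G.Adj x z → ¬ G.Adj y z) :
    (adjMat G ^ 2) x y = 0 := by
  classical
  rw [adjMat_eq_adjMatrix, sq, adjMatrix_mul_apply]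
  refine Finset.sum_eq_zero fun z hz => ?_
  rw [adjMatrix_apply, if_neg fun hzy => h z ((G.mem_neighborFinset x z).1 hz) hzy.symm]

lemma adjMat_sq_apply_eq_one_of_unique {x y z : V} (hxz : G.Adj x z) (hyz : G.Adj y z)
    (h : ∀ w, G.Adj x w → G.Adj y w → w = z) : (adjMat G ^ 2) x y = 1 := by
  classical
  rw [adjMat_eq_adjMatrix, sq, adjMatrix_mul_apply,
    Finset.sum_eq_single z (fun w hw hwz => ?_) fun hz => ?_]
  · rw [adjMatrix_apply, if_pos hyz.symm]
  · rw [adjMatrix_apply, if_neg fun hwy => hwz (h w ((G.mem_neighborFinset x w).1 hw) hwy.symm)]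
  · exact absurd ((G.mem_neighborFinset x z).2 hxz) hz

lemma adjMat_sq_apply_self [DecidableRel G.Adj] (x : V) : (adjMat G ^ 2) x x = G.degree x := by
  rw [adjMat_eq_adjMatrix, sq, adjMatrix_mul_self_apply_self]

lemma spectralMoment_zero : spectralMoment G 0 = Fintype.card V := by
  rw [spectralMoment, pow_zero, Matrix.trace_one]

lemma spectralMoment_two [DecidableRel G.Adj] : spectralMoment G 2 = 2 * G.edgeFinset.card := by
  simp only [spectralMoment, Matrix.trace, Matrix.diag_apply, adjMat_sq_apply_self]
  exact_mod_cast G.sum_degrees_eq_twice_card_edges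

lemma spectralMoment_of_odd (hG : G.IsBipartite) {k : ℕ} (hk : Odd k) : spectralMoment G k = 0 := by
  classical
  refine Finset.sum_eq_zero fun x _ => ?_
  rw [Matrix.diag_apply, adjMat_eq_adjMatrix, adjMatrix_pow_apply_eq_card_walk, Nat.cast_eq_zero,
    Fintype.card_eq_zero_iff]
  refine ⟨fun w => Nat.not_even_iff_odd.2 hk ?_⟩
  rw [← w.2]
  exact two_colorable_iff_forall_loop_even.1 hG x w.1

lemma SLt.of_even (hG : G.IsBipartite) (hH : H.IsBipartite) {k : ℕ} (hk : 1 ≤ k)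
    (hcard : 2 * k + 1 ≤ Fintype.card V)
    (heq : ∀ i < k, spectralMoment G (2 * i) = spectralMoment H (2 * i))
    (hlt : spectralMoment G (2 * k) < spectralMoment H (2 * k)) : SLt G H := by
  refine ⟨2 * k, by omega, by omega, fun i hi => ?_, hlt⟩
  obtain ⟨i, rfl | rfl⟩ := i.even_or_odd'
  · exact heq i (by omega)
  · rw [spectralMoment_of_odd hG (odd_two_mul_add_one i),
      spectralMoment_of_odd hH (odd_two_mul_add_one i)]

lemma SLt.of_spectralMoment_four_lt (hG : G.IsBipartite) (hH : H.IsBipartite)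
    (hcard : 5 ≤ Fintype.card V) (heq : spectralMoment G 2 = spectralMoment H 2)
    (hlt : spectralMoment G 4 < spectralMoment H 4) : SLt G H := by
  refine SLt.of_even hG hH one_le_two hcard (fun i hi => ?_) hlt
  interval_cases i
  · rw [mul_zero, spectralMoment_zero, spectralMoment_zero]
  · exact heq

end SpectralMoment

section Forest

variable {V : Type*} {G : SimpleGraph V}

lemma eq_of_adj_adj_of_isAcyclic (hG : G.IsAcyclic) {x y z w : V} (hxy : x ≠ y) (hxz : G.Adj x z)
    (hyz : G.Adj y z) (hxw : G.Adj x w) (hyw : G.Adj y w) : w = z := by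
  have hpath {v : V} (hxv : G.Adj x v) (hyv : G.Adj y v) :
      (Walk.cons hxv (Walk.cons hyv.symm Walk.nil)).IsPath := by
    simp [hxv.ne, hyv.ne', hxy]
  have := congrArg Subtype.val
    (hG.subsingleton_path x y |>.elim ⟨_, hpath hxw hyw⟩ ⟨_, hpath hxz hyz⟩)
  simpa using congrArg (Walk.getVert · 1) this

variable [Fintype V] [DecidableEq V]

lemma adjMat_sq_apply_mul_self (hG : G.IsAcyclic) {x y : V} (hxy : x ≠ y) :
    (adjMat G ^ 2) x y * (adjMat G ^ 2) x y = (adjMat G ^ 2) x y := by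
  by_cases h : ∃ z, G.Adj x z ∧ G.Adj y z
  · obtain ⟨z, hxz, hyz⟩ := h
    rw [adjMat_sq_apply_eq_one_of_unique hxz hyz fun w =>
      eq_of_adj_adj_of_isAcyclic hG hxy hxz hyz, mul_one]
  · rw [adjMat_sq_apply_eq_zero fun z hxz hyz => h ⟨z, hxz, hyz⟩, mul_zero]

variable [DecidableRel G.Adj]

open scoped Matrix in
lemma sum_adjMat_sq_apply : ∑ x, ∑ y, (adjMat G ^ 2) x y = ∑ x, (G.degree x : ℝ) ^ 2 := by
  have hdeg (x : V) : (adjMat G *ᵥ 1) x = G.degree x := by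
    rw [adjMat_eq_adjMatrix, adjMatrix_mulVec_apply]
    simp
  calc ∑ x, ∑ y, (adjMat G ^ 2) x y
      = 1 ⬝ᵥ (adjMat G ^ 2) *ᵥ 1 := by
        simp [dotProduct, Matrix.mulVec]
    _ = (adjMat G *ᵥ 1) ⬝ᵥ (adjMat G *ᵥ 1) := by
        rw [sq, ← Matrix.mulVec_mulVec, Matrix.dotProduct_mulVec, ← Matrix.mulVec_transpose,
          transpose_adjMat]
    _ = ∑ x, (G.degree x : ℝ) ^ 2 := by
        simp only [dotProduct, hdeg, sq]

/-- The off-diagonal entries of `A²` are `0` or `1`, so they equal their squares. -/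
lemma spectralMoment_four_of_isAcyclic (hG : G.IsAcyclic) :
    spectralMoment G 4 = 2 * ∑ x, (G.degree x : ℝ) ^ 2 - ∑ x, (G.degree x : ℝ) := by
  have hentry (x y : V) : (adjMat G ^ 2) x y * (adjMat G ^ 2) y x =
      (adjMat G ^ 2) x y + if x = y then (G.degree x : ℝ) ^ 2 - G.degree x else 0 := by
    split_ifs with hxy
    · rw [← hxy, adjMat_sq_apply_self]
      ring
    · rw [adjMat_pow_apply_comm 2 y x, adjMat_sq_apply_mul_self hG hxy, add_zero]
  calc spectralMoment G 4
      = ∑ x, ∑ y, (adjMat G ^ 2) x y * (adjMat G ^ 2) y x := by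
        rw [spectralMoment, show 4 = 2 + 2 from rfl, pow_add]
        simp only [Matrix.trace, Matrix.diag_apply, Matrix.mul_apply]
    _ = ∑ x, (G.degree x : ℝ) ^ 2 + ∑ x, ((G.degree x : ℝ) ^ 2 - G.degree x) := by
        simp only [hentry, Finset.sum_add_distrib, sum_adjMat_sq_apply, Finset.sum_ite_eq,
          Finset.mem_univ, if_true]
    _ = 2 * ∑ x, (G.degree x : ℝ) ^ 2 - ∑ x, (G.degree x : ℝ) := by
        rw [Finset.sum_sub_distrib]
        ring

end Forest

section Bipartite

variable {V R : Type*} [Fintype V] [DecidableEq V] [Semiring R]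

lemma submatrix_coe_pow {M : Matrix V V R} {s : Finset V} (h : ∀ x ∉ s, ∀ y ∈ s, M x y = 0)
    (k : ℕ) :
    (M ^ k).submatrix (Subtype.val : s → V) (Subtype.val : s → V) =
      M.submatrix (Subtype.val : s → V) (Subtype.val : s → V) ^ k := by
  induction k with
  | zero => rw [pow_zero, pow_zero, Matrix.submatrix_one _ Subtype.val_injective]
  | succ k ih =>
    ext x y
    rw [pow_succ, pow_succ, ← ih, Matrix.submatrix_apply, Matrix.mul_apply, Matrix.mul_apply,
      Finset.univ_eq_attach]
    simp only [Matrix.submatrix_apply]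
    rw [Finset.sum_attach s fun z => (M ^ k) x z * M z y]
    exact (Finset.sum_subset s.subset_univ fun z _ hz => by rw [h z hz y y.2, mul_zero]).symm

/-- Writing `P` for the projection to the vertices in `s`, bipartiteness says `A = P A + A P`. -/
lemma spectralMoment_succ_eq_two_mul_sum {G : SimpleGraph V} {s t : Finset V}
    (h : G.IsBipartiteWith s t) (k : ℕ) :
    spectralMoment G (k + 1) = 2 * ∑ x ∈ s, (adjMat G ^ (k + 1)) x x := by
  set P : Matrix V V ℝ := Matrix.diagonal fun x => if x ∈ s then 1 else 0 with hP
  have hsplit : adjMat G = P * adjMat G + adjMat G * P := by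
    ext x y
    rw [Matrix.add_apply, Matrix.diagonal_mul, Matrix.mul_diagonal]
    by_cases hxy : G.Adj x y
    · have hdisj := Finset.disjoint_left.1 (Finset.disjoint_coe.1 h.disjoint)
      rcases h.mem_of_adj hxy with ⟨hx, hy⟩ | ⟨hx, hy⟩
      · rw [if_pos (Finset.mem_coe.1 hx), if_neg fun hys => hdisj hys hy]
        ring
      · rw [if_pos (Finset.mem_coe.1 hy), if_neg fun hxs => hdisj hxs hx]
        ring
    · simp [adjMat, hxy]
  calc spectralMoment G (k + 1)
      = (adjMat G ^ k * (P * adjMat G + adjMat G * P)).trace := by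
        rw [← hsplit, ← pow_succ, spectralMoment]
    _ = 2 * (adjMat G ^ (k + 1) * P).trace := by
        rw [mul_add, Matrix.trace_add, ← mul_assoc, Matrix.trace_mul_comm, ← mul_assoc,
          ← mul_assoc, ← pow_succ', ← pow_succ, two_mul]
    _ = 2 * ∑ x ∈ s, (adjMat G ^ (k + 1)) x x := by
        simp [Matrix.trace, hP, Matrix.mul_diagonal, Finset.sum_ite_mem]

lemma spectralMoment_two_mul_succ_eq_two_mul_trace {G : SimpleGraph V} {s t : Finset V}
    (h : G.IsBipartiteWith s t) (k : ℕ) :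
    spectralMoment G (2 * (k + 1)) =
      2 * ((adjMat G ^ 2).submatrix (Subtype.val : s → V) (Subtype.val : s → V) ^
        (k + 1)).trace := by
  have hblock (x : V) (hx : x ∉ s) (y : V) (hy : y ∈ s) : (adjMat G ^ 2) x y = 0 :=
    adjMat_sq_apply_eq_zero fun _ hxz hyz => hx (h.mem_of_mem_adj' (h.mem_of_mem_adj hy hyz) hxz)
  rw [← submatrix_coe_pow hblock, ← pow_mul]
  change _ = 2 * ∑ x : s, (adjMat G ^ (2 * (k + 1))) x x
  rw [Finset.univ_eq_attach, Finset.sum_attach s fun x => (adjMat G ^ (2 * (k + 1))) x x]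
  exact spectralMoment_succ_eq_two_mul_sum h (2 * k + 1)

end Bipartite

section OnesAddDiagonal

variable {ι R : Type*} [Fintype ι] [CommSemiring R]

lemma ones_mul_ones :
    (Matrix.of fun _ _ => 1 : Matrix ι ι R) * Matrix.of (fun _ _ => 1) =
      (Fintype.card ι : R) • Matrix.of fun _ _ => 1 := by
  ext i j
  simp [Matrix.mul_apply]

variable [DecidableEq ι] (c : ι → R)

lemma trace_ones_add_diagonal :
    (Matrix.of (fun _ _ => 1) + Matrix.diagonal c).trace = Fintype.card ι + ∑ i, c i := by
  simp [Matrix.trace, Finset.sum_add_distrib]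

lemma trace_ones_mul_diagonal :
    (Matrix.of (fun _ _ => 1) * Matrix.diagonal c).trace = ∑ i, c i := by
  simp [Matrix.trace, Matrix.mul_diagonal]

lemma trace_ones_add_diagonal_sq :
    ((Matrix.of (fun _ _ => 1) + Matrix.diagonal c) ^ 2).trace =
      (Fintype.card ι : R) ^ 2 + 2 * ∑ i, c i + ∑ i, c i ^ 2 := by
  set J : Matrix ι ι R := Matrix.of fun _ _ => 1 with hJ
  set D := Matrix.diagonal c with hD
  have hJJ : (J * J).trace = (Fintype.card ι : R) ^ 2 := by
    simp [hJ, ones_mul_ones, Matrix.trace, sq]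
  have hJD : (J * D).trace = ∑ i, c i := trace_ones_mul_diagonal c
  have hDD : (D * D).trace = ∑ i, c i ^ 2 := by
    simp [hD, Matrix.diagonal_mul_diagonal, sq]
  rw [sq, add_mul, mul_add, mul_add]
  simp only [Matrix.trace_add]
  rw [Matrix.trace_mul_comm D J, hJJ, hJD, hDD]
  ring

lemma trace_ones_add_diagonal_cube :
    ((Matrix.of (fun _ _ => 1) + Matrix.diagonal c) ^ 3).trace =
      (Fintype.card ι : R) ^ 3 + 3 * Fintype.card ι * ∑ i, c i + 3 * ∑ i, c i ^ 2
        + ∑ i, c i ^ 3 := by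
  set J : Matrix ι ι R := Matrix.of fun _ _ => 1 with hJ
  set D := Matrix.diagonal c with hD
  have hJJ : J * J = (Fintype.card ι : R) • J := ones_mul_ones
  have hJJJ : (J * J * J).trace = (Fintype.card ι : R) ^ 3 := by
    rw [hJJ, Matrix.smul_mul, hJJ]
    simp [hJ, Matrix.trace]
    ring
  have hJJD : (J * J * D).trace = Fintype.card ι * ∑ i, c i := by
    rw [hJJ, Matrix.smul_mul, Matrix.trace_smul, trace_ones_mul_diagonal, smul_eq_mul]
  have hJDD : (J * D * D).trace = ∑ i, c i ^ 2 := by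
    rw [mul_assoc, hD, Matrix.diagonal_mul_diagonal, trace_ones_mul_diagonal]
    simp only [sq]
  have hDDD : (D * D * D).trace = ∑ i, c i ^ 3 := by
    simp [hD, Matrix.diagonal_mul_diagonal, pow_succ]
  have hexpand : (J + D) ^ 3 = J * J * J + J * J * D + J * D * J + D * J * J + J * D * D
      + D * J * D + D * D * J + D * D * D := by
    simp only [pow_succ, pow_zero, one_mul, add_mul, mul_add]
    abel
  rw [hexpand]
  simp only [Matrix.trace_add]
  rw [Matrix.trace_mul_cycle J D J, Matrix.trace_mul_cycle D J J,
    Matrix.trace_mul_cycle J D J, Matrix.trace_mul_cycle D J D, Matrix.trace_mul_cycle D D J,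
    hJJJ, hJJD, hJDD, hDDD]
  ring

end OnesAddDiagonal

section HeightTwo

/-- `G` is the tree of height at most two with root `u` in which `f` sends every other vertex to its
parent and the root to itself. -/
structure IsHeightTwo {V : Type*} (G : SimpleGraph V) (u : V) (f : V → V) : Prop where
  height : ∀ x, f (f x) = u
  adj_iff : ∀ x y, G.Adj x y ↔ x ≠ y ∧ (f x = y ∨ f y = x)

/-- The children of the root `u` of a tree with parent function `f`. -/
def rootChildren {V : Type*} [Fintype V] [DecidableEq V] (u : V) (f : V → V) : Finset V :=
  {x | x ≠ u ∧ f x = u}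

/-- The number of children of the vertex `b ≠ f b` in a tree with parent function `f`; the root,
being its own parent, is counted as one of its children. -/
def childCount {V : Type*} [Fintype V] [DecidableEq V] (f : V → V) (b : V) : ℕ :=
  Finset.card {x | f x = b}

/-- The numbers of children of the children of the root: a complete isomorphism invariant of trees
of height two. -/
def branchSizes {V : Type*} [Fintype V] [DecidableEq V] (u : V) (f : V → V) : Multiset ℕ :=
  (rootChildren u f).val.map (childCount f)

lemma mem_rootChildren {V : Type*} [Fintype V] [DecidableEq V] {u x : V} {f : V → V} :
    x ∈ rootChildren u f ↔ x ≠ u ∧ f x = u := by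
  simp [rootChildren]

lemma card_branchSizes {V : Type*} [Fintype V] [DecidableEq V] {u : V} {f : V → V} :
    (branchSizes u f).card = (rootChildren u f).card :=
  Multiset.card_map _ _

lemma sum_map_branchSizes {V R : Type*} [Fintype V] [DecidableEq V] [AddCommMonoid R] {u : V}
    {f : V → V} (φ : ℕ → R) :
    ((branchSizes u f).map φ).sum = ∑ b ∈ rootChildren u f, φ (childCount f b) := by
  rw [branchSizes, Multiset.map_map]
  rfl

lemma sum_childCount_pow {V : Type*} [Fintype V] [DecidableEq V] {u : V} {f : V → V} (k : ℕ) :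
    ∑ b : rootChildren u f, (childCount f b : ℝ) ^ k =
      (((branchSizes u f).map (· ^ k)).sum : ℕ) := by
  rw [Finset.univ_eq_attach, Finset.sum_attach _ fun b => (childCount f b : ℝ) ^ k,
    sum_map_branchSizes]
  push_cast
  rfl

lemma sum_childCount {V : Type*} [Fintype V] [DecidableEq V] {u : V} {f : V → V} :
    ∑ b : rootChildren u f, (childCount f b : ℝ) = (branchSizes u f).sum := by
  simpa using sum_childCount_pow (u := u) (f := f) 1

namespace IsHeightTwo

variable {V : Type*} {G : SimpleGraph V} {u : V} {f : V → V}

lemma root (hG : IsHeightTwo G u f) : f u = u := by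
  rw [← hG.height u, hG.height (f u), hG.height u]

variable [Fintype V] [DecidableEq V]

lemma childCount_root (hG : IsHeightTwo G u f) :
    childCount f u = (rootChildren u f).card + 1 := by
  have hinsert : ({x | f x = u} : Finset V) = insert u (rootChildren u f) := by
    ext x
    have := hG.root
    by_cases hx : x = u <;> simp_all [mem_rootChildren]
  rw [childCount, hinsert, Finset.card_insert_of_notMem fun h => (mem_rootChildren.1 h).1 rfl]

lemma card_branchSizes_add_sum (hG : IsHeightTwo G u f) :
    (branchSizes u f).card + (branchSizes u f).sum + 1 = Fintype.card V := by
  have hmaps (x : V) (_ : x ∈ Finset.univ) : f x ∈ insert u (rootChildren u f) := by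
    rw [Finset.mem_insert, mem_rootChildren]
    exact (eq_or_ne (f x) u).imp_right fun hx => ⟨hx, hG.height x⟩
  rw [← Finset.card_univ, Finset.card_eq_sum_card_fiberwise hmaps,
    Finset.sum_insert fun h => (mem_rootChildren.1 h).1 rfl]
  change _ = childCount f u + ∑ b ∈ rootChildren u f, childCount f b
  rw [hG.childCount_root, card_branchSizes, ← Multiset.map_id' (branchSizes u f),
    sum_map_branchSizes]
  ring

lemma isBipartiteWith (hG : IsHeightTwo G u f) :
    G.IsBipartiteWith (rootChildren u f : Finset V) ((rootChildren u f)ᶜ : Finset V) where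
  disjoint := Finset.disjoint_coe.2 disjoint_compl_right
  mem_of_adj x y h := by
    have hx := hG.height x
    have hy := hG.height y
    have hu := hG.root
    rw [hG.adj_iff] at h
    simp only [Finset.mem_coe, Finset.mem_compl, mem_rootChildren]
    grind

lemma adj_iff_of_mem_rootChildren (hG : IsHeightTwo G u f) {b x : V}
    (hb : b ∈ rootChildren u f) : G.Adj b x ↔ x = u ∨ f x = b := by
  obtain ⟨hbu, hfb⟩ := mem_rootChildren.1 hb
  rw [hG.adj_iff, hfb, eq_comm (a := u)]
  refine and_iff_right_of_imp ?_
  rintro (rfl | h) rfl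
  · exact hbu rfl
  · exact hbu (h.symm.trans hfb)

lemma degree_of_mem_rootChildren [DecidableRel G.Adj] (hG : IsHeightTwo G u f) {b : V}
    (hb : b ∈ rootChildren u f) : G.degree b = 1 + childCount f b := by
  have hnbr : G.neighborFinset b = insert u ({x | f x = b} : Finset V) := by
    ext x
    simp [hG.adj_iff_of_mem_rootChildren hb]
  have hu : u ∉ ({x | f x = b} : Finset V) := by
    simpa [hG.root] using (mem_rootChildren.1 hb).1.symm
  rw [← G.card_neighborFinset_eq_degree, hnbr, Finset.card_insert_of_notMem hu, add_comm,
    childCount]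

/-- Distinct children of the root have only the root as a common neighbour. -/
lemma submatrix_adjMat_sq (hG : IsHeightTwo G u f) :
    (adjMat G ^ 2).submatrix (Subtype.val : rootChildren u f → V)
        (Subtype.val : rootChildren u f → V) =
      Matrix.of (fun _ _ => 1) +
        Matrix.diagonal fun b : rootChildren u f => (childCount f b : ℝ) := by
  classical
  ext ⟨b, hb⟩ ⟨c, hc⟩
  rw [Matrix.submatrix_apply, Matrix.add_apply, Matrix.of_apply]
  obtain rfl | hbc := eq_or_ne b c
  · rw [Matrix.diagonal_apply_eq, adjMat_sq_apply_self, hG.degree_of_mem_rootChildren hb]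
    push_cast
    rfl
  · rw [Matrix.diagonal_apply_ne _ fun h => hbc (congrArg Subtype.val h), add_zero]
    refine adjMat_sq_apply_eq_one_of_unique ((hG.adj_iff_of_mem_rootChildren hb).2 (.inl rfl))
      ((hG.adj_iff_of_mem_rootChildren hc).2 (.inl rfl)) fun x hbx hcx => ?_
    rw [hG.adj_iff_of_mem_rootChildren hb] at hbx
    rw [hG.adj_iff_of_mem_rootChildren hc] at hcx
    grind

lemma spectralMoment_two_mul_succ (hG : IsHeightTwo G u f) (k : ℕ) :
    spectralMoment G (2 * (k + 1)) = 2 * ((Matrix.of (fun _ _ => 1) +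
      Matrix.diagonal fun b : rootChildren u f => (childCount f b : ℝ)) ^ (k + 1)).trace := by
  rw [spectralMoment_two_mul_succ_eq_two_mul_trace hG.isBipartiteWith, hG.submatrix_adjMat_sq]

lemma spectralMoment_two (hG : IsHeightTwo G u f) :
    spectralMoment G 2 = 2 * ((branchSizes u f).card + (branchSizes u f).sum) := by
  rw [hG.spectralMoment_two_mul_succ 0, zero_add, pow_one, trace_ones_add_diagonal,
    sum_childCount, Fintype.card_coe, card_branchSizes]

lemma spectralMoment_four (hG : IsHeightTwo G u f) :
    spectralMoment G 4 = 2 * ((branchSizes u f).card ^ 2 + 2 * (branchSizes u f).sum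
      + (((branchSizes u f).map (· ^ 2)).sum : ℕ)) := by
  rw [hG.spectralMoment_two_mul_succ 1, trace_ones_add_diagonal_sq, sum_childCount,
    sum_childCount_pow, Fintype.card_coe, card_branchSizes]

lemma spectralMoment_six (hG : IsHeightTwo G u f) :
    spectralMoment G 6 = 2 * ((branchSizes u f).card ^ 3
      + 3 * (branchSizes u f).card * (branchSizes u f).sum
      + 3 * (((branchSizes u f).map (· ^ 2)).sum : ℕ)
      + (((branchSizes u f).map (· ^ 3)).sum : ℕ)) := by
  rw [hG.spectralMoment_two_mul_succ 2, trace_ones_add_diagonal_cube, sum_childCount,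
    sum_childCount_pow, sum_childCount_pow, Fintype.card_coe, card_branchSizes]

end IsHeightTwo

end HeightTwo

section HeightTwoComparison

variable {V : Type*} [Fintype V] [DecidableEq V] {G H : SimpleGraph V} {u w : V} {f g : V → V}

namespace IsHeightTwo

lemma sum_branchSizes_eq (hG : IsHeightTwo G u f) (hH : IsHeightTwo H w g)
    (hcard : (branchSizes u f).card = (branchSizes w g).card) :
    (branchSizes u f).sum = (branchSizes w g).sum := by
  have := hG.card_branchSizes_add_sum
  have := hH.card_branchSizes_add_sum
  omega

lemma spectralMoment_two_eq (hG : IsHeightTwo G u f) (hH : IsHeightTwo H w g)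
    (hcard : (branchSizes u f).card = (branchSizes w g).card) :
    spectralMoment G 2 = spectralMoment H 2 := by
  rw [hG.spectralMoment_two, hH.spectralMoment_two, hG.sum_branchSizes_eq hH hcard, hcard]

lemma sLt_of_sum_sq_lt (hG : IsHeightTwo G u f) (hH : IsHeightTwo H w g)
    (hV : 5 ≤ Fintype.card V) (hcard : (branchSizes u f).card = (branchSizes w g).card)
    (hlt : ((branchSizes u f).map (· ^ 2)).sum < ((branchSizes w g).map (· ^ 2)).sum) :
    SLt G H := by
  refine SLt.of_spectralMoment_four_lt hG.isBipartiteWith.isBipartite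
    hH.isBipartiteWith.isBipartite hV (hG.spectralMoment_two_eq hH hcard) ?_
  rw [hG.spectralMoment_four, hH.spectralMoment_four, hG.sum_branchSizes_eq hH hcard, hcard]
  gcongr

lemma sLt_of_sum_cube_lt (hG : IsHeightTwo G u f) (hH : IsHeightTwo H w g)
    (hV : 7 ≤ Fintype.card V) (hcard : (branchSizes u f).card = (branchSizes w g).card)
    (heq : ((branchSizes u f).map (· ^ 2)).sum = ((branchSizes w g).map (· ^ 2)).sum)
    (hlt : ((branchSizes u f).map (· ^ 3)).sum < ((branchSizes w g).map (· ^ 3)).sum) :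
    SLt G H := by
  have hsum := hG.sum_branchSizes_eq hH hcard
  refine SLt.of_even hG.isBipartiteWith.isBipartite hH.isBipartiteWith.isBipartite
    (by norm_num : 1 ≤ 3) hV (fun i hi => ?_) ?_
  · interval_cases i
    · rw [mul_zero, spectralMoment_zero, spectralMoment_zero]
    · exact hG.spectralMoment_two_eq hH hcard
    · rw [hG.spectralMoment_four, hH.spectralMoment_four, hsum, hcard, heq]
  · rw [hG.spectralMoment_six, hH.spectralMoment_six, hsum, hcard, heq]
    gcongr

end IsHeightTwo

end HeightTwoComparison

section Iso

lemma exists_equiv_of_card_fiber_eq {α β γ : Type*} [Fintype α] [Fintype β] [DecidableEq γ]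
    (a : α → γ) (b : β → γ)
    (h : ∀ c, Fintype.card {x // a x = c} = Fintype.card {y // b y = c}) :
    ∃ e : α ≃ β, ∀ x, b (e x) = a x :=
  ⟨Equiv.ofFiberEquiv fun c => Fintype.equivOfCardEq (h c),
    Equiv.ofFiberEquiv_map fun c => Fintype.equivOfCardEq (h c)⟩

namespace IsHeightTwo

variable {V W : Type*} {G : SimpleGraph V} {H : SimpleGraph W} {u : V} {f : V → V} {w : W}
  {g : W → W}

lemma nonempty_iso_of_equiv (hG : IsHeightTwo G u f) (hH : IsHeightTwo H w g) (e : V ≃ W)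
    (he : ∀ x, g (e x) = e (f x)) : Nonempty (G ≃g H) :=
  ⟨⟨e, fun {x y} => by
    rw [hG.adj_iff, hH.adj_iff, he, he, e.injective.eq_iff, e.injective.eq_iff,
      e.injective.ne_iff]⟩⟩

variable [Fintype V] [Fintype W] [DecidableEq V] [DecidableEq W]

lemma card_fiber_label_eq (hG : IsHeightTwo G u f) (c : Option ℕ) :
    Fintype.card {x : {x // f x = u} // (if x.1 = u then none else some (childCount f x.1)) = c} =
      c.elim 1 fun n => (branchSizes u f).count n := by
  cases c with
  | none =>
    refine Fintype.card_eq_one_iff.2 ⟨⟨⟨u, hG.root⟩, if_pos rfl⟩, fun ⟨⟨x, _⟩, hx⟩ => ?_⟩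
    simpa using hx
  | some n =>
    rw [Option.elim_some, branchSizes, Multiset.count_map, ← Finset.filter_val,
      Finset.card_val, ← Fintype.card_coe]
    refine Fintype.card_congr ((Equiv.subtypeSubtypeEquivSubtypeInter _
      fun x => (if x = u then none else some (childCount f x)) = some n).trans
        (Equiv.subtypeEquivRight fun x => ?_))
    simp only [Finset.mem_filter, mem_rootChildren]
    grind

/-- Label the root by `none` and each of its children by its number of children: equality of the
branch sizes says that every label occurs equally often in both trees. -/
lemma exists_equiv_fiber_root (hG : IsHeightTwo G u f) (hH : IsHeightTwo H w g)
    (h : branchSizes u f = branchSizes w g) :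
    ∃ σ : {x // f x = u} ≃ {y // g y = w}, (∀ x, (σ x : W) = w ↔ (x : V) = u) ∧
      ∀ x, childCount g (σ x) = childCount f x := by
  obtain ⟨σ, hσ⟩ := exists_equiv_of_card_fiber_eq
    (fun x : {x // f x = u} => if x.1 = u then none else some (childCount f x.1))
    (fun y : {y // g y = w} => if y.1 = w then none else some (childCount g y.1))
    fun c => by rw [hG.card_fiber_label_eq, hH.card_fiber_label_eq, h]
  have hroot (x : {x // f x = u}) : (σ x : W) = w ↔ (x : V) = u := by
    have := hσ x
    split_ifs at this <;> simp_all
  refine ⟨σ, hroot, fun x => ?_⟩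
  by_cases hx : (x : V) = u
  · rw [hx, (hroot x).2 hx, hG.childCount_root, hH.childCount_root, ← card_branchSizes,
      ← card_branchSizes, h]
  · simpa [hx, mt (hroot x).1 hx] using hσ x

/-- `η` is the required bijection on the vertices that are not children of the root; on the others
it is replaced by the bijection `σ` with which it was built to be compatible. -/
lemma nonempty_iso (hG : IsHeightTwo G u f) (hH : IsHeightTwo H w g)
    (h : branchSizes u f = branchSizes w g) : Nonempty (G ≃g H) := by
  obtain ⟨σ, hσroot, hσcount⟩ := hG.exists_equiv_fiber_root hH h
  obtain ⟨η, hη⟩ := exists_equiv_of_card_fiber_eq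
    (fun x => σ ⟨f x, hG.height x⟩) (fun y => (⟨g y, hH.height y⟩ : {y // g y = w})) fun c => by
      have hfiber (x : V) : σ ⟨f x, hG.height x⟩ = c ↔ f x = (σ.symm c).1 := by
        rw [← Equiv.eq_symm_apply, Subtype.ext_iff]
      have := hσcount (σ.symm c)
      simp_rw [hfiber, Subtype.ext_iff, Fintype.card_subtype]
      simpa [childCount] using this.symm
  simp only [Subtype.ext_iff] at hη
  have hηroot (x : V) : f x = u ↔ g (η x) = w := by rw [hη, hσroot]
  let e : V ≃ W := (Equiv.sumCompl (f · = u)).symm.trans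
    ((σ.sumCongr (η.subtypeEquiv fun x => not_congr (hηroot x))).trans (Equiv.sumCompl (g · = w)))
  have he_fiber (x : V) (hx : f x = u) : e x = σ ⟨x, hx⟩ := by
    simp only [e, Equiv.trans_apply, Equiv.sumCompl_symm_apply_of_pos (p := (f · = u)) hx]
    rfl
  have he_compl (x : V) (hx : f x ≠ u) : e x = η x := by
    simp only [e, Equiv.trans_apply, Equiv.sumCompl_symm_apply_of_neg (p := (f · = u)) hx]
    rfl
  refine hG.nonempty_iso_of_equiv hH e fun x => ?_
  by_cases hx : f x = u
  · rw [he_fiber x hx, (σ ⟨x, hx⟩).2, hx, he_fiber u hG.root, (hσroot _).2 rfl]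
  · rw [he_compl x hx, hη, he_fiber (f x) (hG.height x)]

end IsHeightTwo

end Iso

section BTree

lemma card_filter_fin_mem_Ico {n a b : ℕ} (h : b ≤ n) :
    Finset.card {x : Fin n | x.val ∈ Finset.Ico a b} = b - a := by
  rw [← Nat.card_Ico a b, ← Finset.card_map Fin.valEmbedding]
  congr 1
  ext x
  simp only [Finset.mem_map, Finset.mem_filter_univ, Fin.valEmbedding_apply]
  exact ⟨fun ⟨_, hy, hyx⟩ => hyx ▸ hy, fun hx =>
    ⟨⟨x, (Finset.mem_Ico.1 hx).2.trans_le h⟩, hx, rfl⟩⟩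

/-- The parent function of `BTree p q k l`, rooted at the vertex `u = 0`. -/
def bTreeParent (p q k l : ℕ) (h : l + 2 ≤ q) (x : Fin (p + q)) : Fin (p + q) :=
  ⟨if x.val ≤ q then 0 else if x.val ≤ q + k then 2 else
    if x.val ≤ q + k + l then x.val - (q + k) + 2 else 1, by split_ifs <;> omega⟩

variable {p q k l : ℕ} (h : l + 2 ≤ q)

lemma isHeightTwo_bTree : IsHeightTwo (BTree p q k l) ⟨0, by omega⟩ (bTreeParent p q k l h) where
  height x := by
    simp only [bTreeParent, Fin.mk.injEq]
    split_ifs <;> omega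
  adj_iff x y := by
    simp only [BTree, SimpleGraph.fromRel_adj, bTreeParent, Fin.ext_iff, ne_eq]
    split_ifs <;> omega

lemma rootChildren_bTree (hp : 1 ≤ p) :
    (rootChildren ⟨0, by omega⟩ (bTreeParent p q k l h)).map Fin.valEmbedding =
      Finset.Ico 1 (q + 1) := by
  ext x
  simp only [Finset.mem_map, mem_rootChildren, bTreeParent, Fin.ext_iff, Fin.valEmbedding_apply,
    Finset.mem_Ico]
  constructor
  · grind
  · exact fun hx => ⟨⟨x, by omega⟩, by grind, rfl⟩

lemma childCount_bTree (hkl : k + l + 1 ≤ p) {b : Fin (p + q)} (hb : 1 ≤ b.val) :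
    childCount (bTreeParent p q k l h) b = if b.val = 1 then p - 1 - k - l else
      if b.val = 2 then k else if b.val ≤ l + 2 then 1 else 0 := by
  have hcount (i j : ℕ) (hj : j ≤ p + q)
      (hij : ∀ x, bTreeParent p q k l h x = b ↔ i ≤ x.val ∧ x.val < j) :
      childCount (bTreeParent p q k l h) b = j - i := by
    rw [childCount, ← card_filter_fin_mem_Ico hj]
    simp only [hij, Finset.mem_Ico]
  simp only [bTreeParent, Fin.ext_iff] at hcount
  split_ifs with hb1 hb2 hb3
  · rw [hcount (q + k + l + 1) (p + q) le_rfl fun x => by split_ifs <;> omega]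
    omega
  · rw [hcount (q + 1) (q + k + 1) (by omega) fun x => by split_ifs <;> omega]
    omega
  · rw [hcount (q + k + (b.val - 2)) (q + k + (b.val - 2) + 1) (by omega)
      fun x => by split_ifs <;> omega]
    omega
  · rw [hcount 0 0 (by omega) fun x => by split_ifs <;> omega]

lemma branchSizes_bTree (hkl : k + l + 1 ≤ p) :
    branchSizes ⟨0, by omega⟩ (bTreeParent p q k l h) = (p - 1 - k - l) ::ₘ k ::ₘ
      (Multiset.replicate l 1 + Multiset.replicate (q - 2 - l) 0) := by
  let φ (i : ℕ) : ℕ :=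
    if i = 1 then p - 1 - k - l else if i = 2 then k else if i ≤ l + 2 then 1 else 0
  have hφ : branchSizes ⟨0, by omega⟩ (bTreeParent p q k l h) =
      (Finset.Ico 1 (q + 1)).val.map φ := by
    rw [← rootChildren_bTree h (k := k) (by omega : 1 ≤ p), Finset.map_val, Multiset.map_map,
      branchSizes]
    refine Multiset.map_congr rfl fun b hb => childCount_bTree h hkl ?_
    exact Nat.one_le_iff_ne_zero.2 fun hb0 => (mem_rootChildren.1 hb).1 (Fin.ext hb0)
  obtain ⟨r, rfl⟩ := Nat.exists_eq_add_of_le h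
  have hones : (List.range' 3 l).map φ = List.replicate l 1 := by
    refine List.eq_replicate_iff.2 ⟨by simp, fun i hi => ?_⟩
    grind
  have hzeros : (List.range' (3 + l) r).map φ = List.replicate r 0 := by
    refine List.eq_replicate_iff.2 ⟨by simp, fun i hi => ?_⟩
    grind
  have hrange : (Finset.Ico 1 (l + 2 + r + 1)).val =
      (1 :: 2 :: (List.range' 3 l ++ List.range' (3 + l) r) : List ℕ) := by
    change ((List.range' 1 (l + 2 + r + 1 - 1) : List ℕ) : Multiset ℕ) = _
    rw [List.range'_append_1, show l + 2 + r + 1 - 1 = l + r + 1 + 1 by omega, List.range'_succ,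
      List.range'_succ]
  rw [hφ, hrange, Multiset.map_coe, List.map_cons, List.map_cons, List.map_append, hones, hzeros,
    ← Multiset.cons_coe, ← Multiset.cons_coe, ← Multiset.coe_add, Multiset.coe_replicate,
    Multiset.coe_replicate, show l + 2 + r - 2 - l = r by omega]
  rfl

end BTree

section Tree

variable {V : Type*} [Fintype V] [Nontrivial V] {G : SimpleGraph V} {s t : Finset V}

lemma union_eq_univ_of_isTree [DecidableEq V] (hG : G.IsTree) (hst : G.IsBipartiteWith s t) :
    s ∪ t = Finset.univ := by
  refine Finset.eq_univ_of_forall fun x => Finset.mem_union.2 ?_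
  obtain ⟨y, hxy⟩ := hG.connected.preconnected.exists_adj_of_nontrivial x
  exact (hst.mem_of_adj hxy).imp And.left And.left

lemma card_add_card_of_isTree (hG : G.IsTree) (hst : G.IsBipartiteWith s t) :
    s.card + t.card = Fintype.card V := by
  classical
  rw [← Finset.card_union_of_disjoint (Finset.disjoint_coe.1 hst.disjoint),
    union_eq_univ_of_isTree hG hst, Finset.card_univ]

variable [DecidableRel G.Adj]

lemma sum_degree_add_one_of_isTree (hG : G.IsTree) (hst : G.IsBipartiteWith s t) :
    ∑ x ∈ s, G.degree x + 1 = s.card + t.card := by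
  rw [isBipartiteWith_sum_degrees_eq_card_edges hst, hG.card_edgeFinset,
    card_add_card_of_isTree hG hst]

/-- As there are no cycles of length four, a vertex of `s` other than `u` has only one neighbour. -/
lemma exists_isHeightTwo [DecidableEq V] (hG : G.IsTree) (hst : G.IsBipartiteWith s t) {u : V}
    (hu : u ∈ s) (hdeg : G.degree u = t.card) :
    ∃ f, IsHeightTwo G u f ∧ rootChildren u f = t := by
  have hnbr : G.neighborFinset u = t :=
    Finset.eq_of_subset_of_card_le (isBipartiteWith_neighborFinset_subset hst hu) hdeg.ge
  have hadj_root (y : V) : G.Adj u y ↔ y ∈ t := by rw [← mem_neighborFinset, hnbr]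
  choose g hg using hG.connected.preconnected.exists_adj_of_nontrivial
  have hg_unique (x y : V) (hxu : x ≠ u) (hx : x ∈ s) (hxy : G.Adj x y) : g x = y :=
    eq_of_adj_adj_of_isAcyclic hG.isAcyclic hxu hxy
      ((hadj_root y).2 (hst.mem_of_mem_adj hx hxy)) (hg x)
      ((hadj_root _).2 (hst.mem_of_mem_adj hx (hg x)))
  have hgt (x : V) (hx : x ∈ s) : g x ∈ t := hst.mem_of_mem_adj hx (hg x)
  have hdisj (x : V) : x ∈ s → x ∉ t :=
    fun hx => Finset.disjoint_left.1 (Finset.disjoint_coe.1 hst.disjoint) hx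
  have hcover (x : V) : x ∈ s ∨ x ∈ t := by
    simp [← Finset.mem_union, union_eq_univ_of_isTree hG hst]
  refine ⟨fun x => if x ∈ s ∧ x ≠ u then g x else u, ⟨fun x => ?_, fun x y => ?_⟩, ?_⟩
  · grind
  · have hloop : G.Adj x y → x ≠ y := fun h => h.ne
    have hside : G.Adj x y → x ∈ s ∧ y ∈ t ∨ x ∈ t ∧ y ∈ s := fun h => hst.mem_of_adj h
    have := G.adj_comm x y
    grind
  · ext x
    rw [mem_rootChildren]
    grind

lemma sum_degree_sq_le_of_degree_ne (hG : G.IsTree) (hst : G.IsBipartiteWith s t) {m : ℕ}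
    (ht : t.card = m + 2) (hne : ∀ x ∈ s, G.degree x ≠ t.card) :
    ∑ x ∈ s, G.degree x ^ 2 ≤ (m + 1) ^ 2 + s.card + 2 := by
  choose e he using fun x =>
    Nat.exists_eq_add_one.2 (hG.connected.preconnected.degree_pos_of_nontrivial x)
  have hsum : (s.val.map e).sum = m + 1 := by
    have := sum_degree_add_one_of_isTree hG hst
    simp only [he, Finset.sum_add_distrib, Finset.sum_const, smul_eq_mul, mul_one] at this
    change ∑ x ∈ s, e x = m + 1
    omega
  let P : (m + 1).Partition := .ofSums _ (s.val.map e) hsum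
  have hP : P.parts ≠ {m + 1} := fun h => by
    have hmem : m + 1 ∈ P.parts := h ▸ Multiset.mem_singleton_self _
    obtain ⟨x, hx, hxe⟩ := Multiset.mem_map.1 (Multiset.mem_of_mem_filter hmem)
    exact hne x hx (by rw [he, hxe, ht])
  have hsq := partition_sum_sq_le_of_parts_ne_singleton P hP
  rw [sum_map_parts_ofSums hsum (φ := (· ^ 2)) rfl, Multiset.map_map] at hsq
  calc ∑ x ∈ s, G.degree x ^ 2 = ∑ x ∈ s, e x ^ 2 + 2 * ∑ x ∈ s, e x + s.card := by
        simp only [he, add_sq, Finset.sum_add_distrib, Finset.mul_sum, Finset.card_eq_sum_ones,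
          mul_one, one_pow]
    _ ≤ (m ^ 2 + 1) + 2 * (m + 1) + s.card := by gcongr; exacts [hsq, hsum.le]
    _ = (m + 1) ^ 2 + s.card + 2 := by ring

lemma spectralMoment_four_le_of_degree_ne [DecidableEq V] (hG : G.IsTree)
    (hst : G.IsBipartiteWith s t) {m n : ℕ} (hs : s.card = m + 2) (ht : t.card = n + 2)
    (hnes : ∀ x ∈ s, G.degree x ≠ t.card) (hnet : ∀ x ∈ t, G.degree x ≠ s.card) :
    spectralMoment G 4 ≤ 2 * ((m + 1) ^ 2 + (n + 1) ^ 2 + 5) := by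
  have hsum {φ : V → ℕ} : ∑ x, φ x = ∑ x ∈ s, φ x + ∑ x ∈ t, φ x := by
    rw [← Finset.sum_union (Finset.disjoint_coe.1 hst.disjoint), union_eq_univ_of_isTree hG hst]
  have hsq_s := sum_degree_sq_le_of_degree_ne hG hst ht hnes
  have hsq_t := sum_degree_sq_le_of_degree_ne hG hst.symm hs hnet
  have hdeg_s := sum_degree_add_one_of_isTree hG hst
  have hdeg_t := sum_degree_add_one_of_isTree hG hst.symm
  have hdeg : ∑ x, G.degree x = 2 * (m + n + 3) := by rw [hsum]; omega
  have hsq : ∑ x, G.degree x ^ 2 ≤ (m + 1) ^ 2 + (n + 1) ^ 2 + (m + n + 8) := by rw [hsum]; omega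
  rw [spectralMoment_four_of_isAcyclic hG.isAcyclic]
  calc 2 * ∑ x, (G.degree x : ℝ) ^ 2 - ∑ x, (G.degree x : ℝ)
      ≤ 2 * ((m + 1) ^ 2 + (n + 1) ^ 2 + (m + n + 8)) - 2 * (m + n + 3) := by
        gcongr <;> norm_cast
        exact hdeg.ge
    _ = 2 * ((m + 1) ^ 2 + (n + 1) ^ 2 + 5) := by ring

end Tree

section Comparison

variable {p q : ℕ}

lemma IsHeightTwo.nonempty_iso_bTree {V : Type*} [Fintype V] [DecidableEq V] {T : SimpleGraph V}
    {u : V} {f : V → V} (hT : IsHeightTwo T u f) (hcard : (branchSizes u f).card = q) {k l : ℕ}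
    (hp : k + l + 1 ≤ p) (hq : l + 2 ≤ q)
    (hparts : (branchSizes u f).filter (· ≠ 0) =
      ((p - 1 - k - l) ::ₘ k ::ₘ .replicate l 1).filter (· ≠ 0)) :
    Nonempty (T ≃g BTree p q k l) := by
  refine hT.nonempty_iso (isHeightTwo_bTree hq) (eq_of_card_eq_of_filter_ne_zero_eq ?_ ?_)
  · rw [hcard, branchSizes_bTree hq hp]
    simp only [Multiset.card_cons, Multiset.card_add, Multiset.card_replicate]
    omega
  · have hzeros : (Multiset.replicate (q - 2 - l) 0).filter (· ≠ 0) = 0 :=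
      Multiset.filter_eq_nil.2 fun i hi => not_not.2 (Multiset.eq_of_mem_replicate hi)
    rw [hparts, branchSizes_bTree hq hp, ← Multiset.cons_add, ← Multiset.cons_add,
      Multiset.filter_add _ _ (Multiset.replicate (q - 2 - l) 0), hzeros, add_zero]

lemma sum_map_branchSizes_bTree_zero_two (hp : 3 ≤ p) (hq : 4 ≤ q) {φ : ℕ → ℕ} (hφ : φ 0 = 0) :
    ((branchSizes ⟨0, by omega⟩ (bTreeParent p q 0 2 hq)).map φ).sum = φ (p - 3) + 2 * φ 1 := by
  rw [branchSizes_bTree hq hp]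
  simp [hφ, two_mul, Nat.sub_sub]

lemma card_branchSizes_bTree_zero_two (hp : 3 ≤ p) (hq : 4 ≤ q) :
    (branchSizes ⟨0, by omega⟩ (bTreeParent p q 0 2 hq)).card = q := by
  have := sum_map_branchSizes_bTree_zero_two hp hq rfl (φ := fun n => n)
  have := (isHeightTwo_bTree (p := p) (k := 0) hq).card_branchSizes_add_sum
  rw [Multiset.map_id', Fintype.card_fin] at *
  omega

/-- The sums of the squares of the branch sizes decide, except for the branch sizes `3, 3` against
`4, 1, 1` when `p = 7`: there `3 ^ 2 + 3 ^ 2 = 4 ^ 2 + 1 + 1`, and the sums of the cubes decide. -/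
lemma IsHeightTwo.sLt_bTree (hp : 3 ≤ p) (hq : 4 ≤ q) {T : SimpleGraph (Fin (p + q))}
    {u : Fin (p + q)} {f : Fin (p + q) → Fin (p + q)} (hT : IsHeightTwo T u f)
    (hcard : (branchSizes u f).card = q)
    (h0 : ¬ Nonempty (T ≃g BTree p q 0 0)) (h1 : ¬ Nonempty (T ≃g BTree p q 0 1))
    (h2 : ¬ Nonempty (T ≃g BTree p q 2 0)) (h3 : ¬ Nonempty (T ≃g BTree p q 0 2)) :
    SLt T (BTree p q 0 2) := by
  obtain ⟨m, rfl⟩ := Nat.exists_eq_add_of_le' hp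
  have hV := hT.card_branchSizes_add_sum
  rw [hcard, Fintype.card_fin] at hV
  have hsum : (branchSizes u f).sum = m + 2 := by omega
  have hB := isHeightTwo_bTree (p := m + 3) (k := 0) hq
  have hcard' := hcard.trans (card_branchSizes_bTree_zero_two hp hq).symm
  let P : (m + 2).Partition := .ofSums _ (branchSizes u f) hsum
  have hPsum {φ : ℕ → ℕ} (hφ : φ 0 = 0) : (P.parts.map φ).sum = ((branchSizes u f).map φ).sum :=
    sum_map_parts_ofSums hsum hφ
  have hPfilter {κ : Multiset ℕ} (h : P.parts = κ) :
      (branchSizes u f).filter (· ≠ 0) = κ.filter (· ≠ 0) := by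
    rw [← h, Nat.Partition.ofSums_parts, Multiset.filter_filter]
    simp only [and_self]
  obtain h | h | h | h | ⟨rfl, h⟩ | h := partition_parts_eq_or_sum_sq_lt P
  · exact absurd (hT.nonempty_iso_bTree hcard (by omega) (by omega)
      (by rw [hPfilter h]; rfl)) h0
  · exact absurd (hT.nonempty_iso_bTree hcard (by omega) (by omega)
      (by rw [hPfilter h]; rfl)) h1
  · exact absurd (hT.nonempty_iso_bTree hcard (by omega) (by omega)
      (by rw [hPfilter h]; rfl)) h2
  · exact absurd (hT.nonempty_iso_bTree hcard (by omega) hq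
      (by rw [hPfilter h]; rfl)) h3
  · refine hT.sLt_of_sum_cube_lt hB (by simp) hcard' ?_ ?_
    · rw [← hPsum (by rfl), h, sum_map_branchSizes_bTree_zero_two hp hq rfl]
      rfl
    · rw [← hPsum (by rfl), h, sum_map_branchSizes_bTree_zero_two hp hq rfl]
      decide
  · refine hT.sLt_of_sum_sq_lt hB (by rw [Fintype.card_fin]; omega) hcard' ?_
    rw [← hPsum (by rfl), sum_map_branchSizes_bTree_zero_two hp hq rfl]
    exact h

lemma TreeBip.exists_isBipartiteWith {T : SimpleGraph (Fin (p + q))} (hT : TreeBip p q T) :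
    T.IsTree ∧ ∃ s t : Finset (Fin (p + q)),
      T.IsBipartiteWith s t ∧ s.card = p ∧ t.card = q := by
  obtain ⟨hTree, s, hs, hadj⟩ := hT
  refine ⟨hTree, s, sᶜ, ⟨Finset.disjoint_coe.2 disjoint_compl_right, fun x y hxy => ?_⟩, hs, ?_⟩
  · simp only [Finset.mem_coe, Finset.mem_compl]
    have := hadj hxy
    tauto
  · rw [Finset.card_compl, hs, Fintype.card_fin, Nat.add_sub_cancel_left]

lemma sLt_bTree_of_degree_eq (hp : 3 ≤ p) (hq : 4 ≤ q) {T : SimpleGraph (Fin (p + q))}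
    [DecidableRel T.Adj] (hT : T.IsTree) {s t : Finset (Fin (p + q))}
    (hst : T.IsBipartiteWith s t) (ht : t.card = q) {u : Fin (p + q)} (hu : u ∈ s)
    (hdeg : T.degree u = q)
    (h0 : ¬ Nonempty (T ≃g BTree p q 0 0)) (h1 : ¬ Nonempty (T ≃g BTree p q 0 1))
    (h2 : ¬ Nonempty (T ≃g BTree p q 2 0)) (h3 : ¬ Nonempty (T ≃g BTree p q 0 2)) :
    SLt T (BTree p q 0 2) := by
  have : Nontrivial (Fin (p + q)) := Fin.nontrivial_iff_two_le.2 (by omega)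
  obtain ⟨f, hf, hroot⟩ := exists_isHeightTwo hT hst hu (hdeg.trans ht.symm)
  exact hf.sLt_bTree hp hq (by rw [card_branchSizes, hroot, ht]) h0 h1 h2 h3

lemma sLt_bTree_of_degree_ne (hp : 3 ≤ p) (hpq : p ≤ q) (hq : 4 ≤ q)
    {T : SimpleGraph (Fin (p + q))} [DecidableRel T.Adj] (hT : T.IsTree)
    {s t : Finset (Fin (p + q))} (hst : T.IsBipartiteWith s t) (hs : s.card = p) (ht : t.card = q)
    (hnes : ∀ x ∈ s, T.degree x ≠ q) (hnet : ∀ x ∈ t, T.degree x ≠ p) :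
    SLt T (BTree p q 0 2) := by
  have : Nontrivial (Fin (p + q)) := Fin.nontrivial_iff_two_le.2 (by omega)
  have hB := isHeightTwo_bTree (p := p) (k := 0) hq
  have hBcard := card_branchSizes_bTree_zero_two hp hq
  have hle := spectralMoment_four_le_of_degree_ne hT hst (m := p - 2) (n := q - 2) (by omega)
    (by omega) (by rwa [ht]) (by rwa [hs])
  refine SLt.of_spectralMoment_four_lt hst.isBipartite hB.isBipartiteWith.isBipartite
    (by rw [Fintype.card_fin]; omega) ?_ (hle.trans_lt ?_)
  · have hBV := hB.card_branchSizes_add_sum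
    rw [← hT.card_edgeFinset, Nat.add_right_cancel_iff] at hBV
    rw [spectralMoment_two, hB.spectralMoment_two, ← hBV, Nat.cast_add]
  · have hBsum := sum_map_branchSizes_bTree_zero_two hp hq (φ := fun n => n) rfl
    rw [Multiset.map_id'] at hBsum
    rw [hB.spectralMoment_four, hBcard, hBsum, sum_map_branchSizes_bTree_zero_two hp hq rfl]
    obtain ⟨m, rfl⟩ := Nat.exists_eq_add_of_le' hp
    obtain ⟨n, rfl⟩ := Nat.exists_eq_add_of_le' hq
    have hm : m + 3 - 2 = m + 1 := rfl
    have hn : n + 4 - 2 = n + 2 := rfl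
    rw [hm, hn, Nat.add_sub_cancel]
    push_cast
    have hmn : (m : ℝ) + 3 ≤ n + 4 := by exact_mod_cast hpq
    linarith

end Comparison

/-- For `p = q ≥ 4` and `n = p + q`, every tree `T ∈ 𝒯_n^{p,q}`
isomorphic to none of `B_{p,q}^{0,0}`, `B_{p,q}^{0,1}`, `B_{p,q}^{2,0}`,
`B_{p,q}^{0,2}` satisfies `T ≺_s B_{p,q}^{0,2}`: for `p = q ≥ 4` the tree
`B_{p,q}^{0,2}` is the unique fourth last tree in the S-order among `𝒯_n^{p,q}`. -/
theorem stmt_10 (p q : ℕ) (hp : 4 ≤ p) (hpq : p = q)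
    (T : SimpleGraph (Fin (p + q))) (hT : TreeBip p q T)
    (h0 : ¬ Nonempty (T ≃g BTree p q 0 0))
    (h1 : ¬ Nonempty (T ≃g BTree p q 0 1))
    (h2 : ¬ Nonempty (T ≃g BTree p q 2 0))
    (h3 : ¬ Nonempty (T ≃g BTree p q 0 2)) :
    SLt T (BTree p q 0 2) := by
  classical
  subst hpq
  have hp3 : 3 ≤ p := by omega
  obtain ⟨hTree, s, t, hst, hs, ht⟩ := hT.exists_isBipartiteWith
  by_cases hfull_s : ∃ u ∈ s, T.degree u = p
  · obtain ⟨u, hu, hdeg⟩ := hfull_s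
    exact sLt_bTree_of_degree_eq hp3 hp hTree hst ht hu hdeg h0 h1 h2 h3
  by_cases hfull_t : ∃ u ∈ t, T.degree u = p
  · obtain ⟨u, hu, hdeg⟩ := hfull_t
    exact sLt_bTree_of_degree_eq hp3 hp hTree hst.symm hs hu hdeg h0 h1 h2 h3
  push Not at hfull_s hfull_t
  exact sLt_bTree_of_degree_ne hp3 le_rfl hp hTree hst hs ht hfull_s hfull_t
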